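/- arXiv:1409.6101 — 3 statements merged into one kernel-verified Lean document; each statement's English description precedes it below -/
import Mathlib

section
/- Let 0 ≤ ω < ω′ and let f be holomorphic on the strip St_{ω′} = {z ∈ ℂ : |Im z| < ω′}, and suppose there exist C ≥ 0 and α > 1 such that |f(z)| ≤ C·(1+|z|)^{−α} for all z ∈ St_{ω′}. Then there exists a measurable function g : ℝ → ℂ with ∫_ℝ e^{ω|s|}|g(s)| ds < ∞ such that f(z) = ∫_ℝ e^{−isz} g(s) ds for all z ∈ St_ω. (Every function in the elementary class E(St_{ω′}) is the Fourier transform of an element of M_ω(ℝ).) -/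
open MeasureTheory Filter Topology

open Complex in
lemma shift_aux (ω' y K α : ℝ) (hy : |y| < ω') (hα : 1 < α) (h : ℂ → ℂ)
    (hh : DifferentiableOn ℂ h {z : ℂ | |z.im| < ω'})
    (hb : ∀ z : ℂ, |z.im| ≤ |y| → ‖h z‖ ≤ K * (1 + |z.re|) ^ (-α)) :
    Integrable (fun x : ℝ => h (x + y * I)) ∧
    ∫ x : ℝ, h (x + y * I) = ∫ x : ℝ, h x := by
  have hJ : Integrable (fun x : ℝ => K * (1 + |x|) ^ (-α)) := by
    have := (integrable_one_add_norm (E := ℝ) (μ := volume) (r := α) (by simpa using hα)).const_mul K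
    simpa using this
  have hint : ∀ c : ℝ, |c| ≤ |y| → Integrable (fun x : ℝ => h (x + c * I)) := by
    intro c hc
    have hcont : Continuous (fun x : ℝ => h (x + c * I)) := by
      refine hh.continuousOn.comp_continuous (by fun_prop) ?_
      intro x
      simpa using hc.trans_lt hy
    refine hJ.mono' hcont.aestronglyMeasurable (Eventually.of_forall fun x => ?_)
    simpa using hb (x + c * I) (by simpa using hc)
  have h0 := hint 0 (by simp)
  have h1 := hint y le_rfl
  refine ⟨h1, ?_⟩
  simp only [ofReal_zero, zero_mul, add_zero] at h0
  have t0 := intervalIntegral_tendsto_integral h0 tendsto_neg_atTop_atBot tendsto_id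
  have t1 := intervalIntegral_tendsto_integral h1 tendsto_neg_atTop_atBot tendsto_id
  have key : ∀ T : ℝ, (∫ x in (-T)..T, h x) - (∫ x in (-T)..T, h (x + y * I))
      + I * (∫ u in (0:ℝ)..y, h (T + u * I)) - I * (∫ u in (0:ℝ)..y, h (-T + u * I)) = 0 := by
    intro T
    have := integral_boundary_rect_eq_zero_of_differentiableOn h (-T) (T + y * I)
        (by
          refine hh.mono ?_
          intro z hz
          have := hz.2
          simp at this
          have := Set.abs_sub_left_of_mem_uIcc this
          simp at this
          exact this.trans_lt hy)
    simpa only [neg_im, ofReal_im, neg_zero, ofReal_zero, zero_mul, add_zero, neg_re,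
      ofReal_re, add_re, mul_re, I_re, mul_zero, I_im, tsub_zero, add_im, mul_im,
      mul_one, zero_add, smul_eq_mul, ofReal_neg] using this
  have hlim : Tendsto (fun T : ℝ => K * (1 + |T|) ^ (-α) * |y|) atTop (𝓝 0) := by
    have a : Tendsto (fun T : ℝ => 1 + |T|) atTop atTop :=
      tendsto_atTop_add_const_left _ _ tendsto_abs_atTop_atTop
    have := (((tendsto_rpow_neg_atTop (y := α) (by linarith)).comp a).const_mul K).mul_const |y|
    simpa using this
  have vert : ∀ σ : ℝ, |σ| = 1 →
      Tendsto (fun T : ℝ => ∫ u in (0:ℝ)..y, h ((σ * T : ℝ) + u * I)) atTop (𝓝 0) := by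
    intro σ hσ
    refine squeeze_zero_norm (fun T => ?_) hlim
    have := intervalIntegral.norm_integral_le_of_norm_le_const (a := 0) (b := y)
      (f := fun u : ℝ => h ((σ * T : ℝ) + u * I)) (C := K * (1 + |T|) ^ (-α)) ?_
    · simpa using this
    · intro u hu
      have := Set.abs_sub_left_of_mem_uIcc (Set.uIoc_subset_uIcc hu)
      have := hb ((σ * T : ℝ) + u * I) (by simpa using this)
      simpa [abs_mul, hσ] using this
  have v1 := vert 1 (by simp)
  have v2 := vert (-1) (by simp)
  have t := ((t0.sub t1).add (v1.const_mul I)).sub (v2.const_mul I)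
  have := tendsto_nhds_unique (t.congr (fun T => by simpa using key T)) tendsto_const_nhds
  simp [sub_eq_zero] at this
  exact this.symm

lemma integrable_exp_abs_aux (c : ℝ) (hc : 0 < c) : Integrable (fun s : ℝ => Real.exp (-c * |s|)) := by
  rw [← integrableOn_univ, ← Set.Iic_union_Ioi (a := (0 : ℝ))]
  refine IntegrableOn.union ?_ ?_
  · refine (integrableOn_exp_mul_Iic hc 0).congr_fun (fun s hs => ?_) measurableSet_Iic
    have hs' : s ≤ 0 := hs
    simp [abs_of_nonpos hs']
  · refine (integrableOn_exp_mul_Ioi (a := -c) (by linarith) 0).congr_fun (fun s hs => ?_)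
      measurableSet_Ioi
    have hs' : 0 < s := hs
    simp [abs_of_pos hs']

open Complex FourierTransform in
theorem elementary_aux
    (ω ω' : ℝ) (hω : 0 ≤ ω) (hωω' : ω < ω') (f : ℂ → ℂ)
    (hf : DifferentiableOn ℂ f {z : ℂ | |z.im| < ω'})
    (C α : ℝ) (hC : 0 ≤ C) (hα : 1 < α)
    (hbound : ∀ z : ℂ, |z.im| < ω' → ‖f z‖ ≤ C * (1 + ‖z‖) ^ (-α)) :
    ∃ g : ℝ → ℂ, Measurable g ∧
      Integrable (fun s : ℝ => Real.exp (ω * |s|) * ‖g s‖) ∧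
      ∀ z : ℂ, (|z.im| < ω ∨ z.im = 0) →
        f z = ∫ s : ℝ, Complex.exp (-Complex.I * s * z) * g s := by
  have hb' : ∀ z : ℂ, |z.im| < ω' → ‖f z‖ ≤ C * (1 + |z.re|) ^ (-α) := by
    intro z hz
    refine (hbound z hz).trans ?_
    refine mul_le_mul_of_nonneg_left ?_ hC
    refine Real.rpow_le_rpow_of_nonpos (by positivity) ?_ (by linarith)
    linarith [Complex.abs_re_le_norm z]
  have hJ : Integrable (fun x : ℝ => C * (1 + |x|) ^ (-α)) := by
    have := (integrable_one_add_norm (E := ℝ) (μ := volume) (r := α) (by simpa using hα)).const_mul C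
    simpa using this
  set K : ℝ := ∫ x : ℝ, C * (1 + |x|) ^ (-α) with hK
  have hcont : ∀ y : ℝ, |y| < ω' → Continuous (fun x : ℝ => f (x + y * I)) := by
    intro y hy
    refine hf.continuousOn.comp_continuous (by fun_prop) ?_
    intro x
    simpa using hy
  have hint : ∀ y : ℝ, |y| < ω' → Integrable (fun x : ℝ => f (x + y * I)) := by
    intro y hy
    refine hJ.mono' (hcont y hy).aestronglyMeasurable (Eventually.of_forall fun x => ?_)
    simpa using hb' (x + y * I) (by simpa using hy)
  have hpos : 0 < ω' := hω.trans_lt hωω'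
  have hcont0 : Continuous (fun x : ℝ => f x) := by simpa using hcont 0 (by simpa using hpos)
  let G : ℝ → ℂ := fun s => ∫ x : ℝ, cexp (I * s * x) * f x
  have hGmeas : Measurable G := by
    apply StronglyMeasurable.measurable
    apply StronglyMeasurable.integral_prod_right
    apply Continuous.stronglyMeasurable
    have : Continuous (fun p : ℝ × ℝ => f p.2) := hcont0.comp continuous_snd
    simp only [Function.uncurry_def]
    exact (by fun_prop : Continuous fun p : ℝ × ℝ => cexp (I * p.1 * p.2)).mul this
  -- shifting the contour
  have hshift : ∀ y : ℝ, |y| < ω' → ∀ s : ℝ,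
      ∫ x : ℝ, cexp (I * s * (x + y * I)) * f (x + y * I) = G s := by
    intro y hy s
    refine (shift_aux ω' y (Real.exp (|s| * |y|) * C) α hy hα (fun z => cexp (I * s * z) * f z)
      ?_ ?_).2
    · refine DifferentiableOn.mul ?_ hf
      exact Differentiable.differentiableOn (by fun_prop)
    · intro z hz
      rw [norm_mul, mul_assoc (Real.exp _)]
      refine mul_le_mul ?_ (hb' z (hz.trans_lt hy)) (norm_nonneg _) (Real.exp_nonneg _)
      rw [Complex.norm_exp]
      apply Real.exp_le_exp.2
      have e : (I * s * z).re = - (s * z.im) := by simp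
      rw [e]
      calc -(s * z.im) ≤ |s * z.im| := neg_le_abs _
        _ = |s| * |z.im| := abs_mul _ _
        _ ≤ _ := by gcongr
  have hnorm : ∀ s x y : ℝ, ‖cexp (I * s * (x + y * I))‖ = Real.exp (-(s * y)) := by
    intro s x y
    rw [Complex.norm_exp]
    congr 1
    simp
  have hG1 : ∀ y : ℝ, |y| < ω' → ∀ s : ℝ, ‖G s‖ ≤ Real.exp (-(s * y)) * K := by
    intro y hy s
    rw [← hshift y hy s, hK, ← integral_const_mul]
    refine norm_integral_le_of_norm_le (hJ.const_mul _) (Eventually.of_forall fun x => ?_)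
    rw [norm_mul, hnorm]
    refine mul_le_mul_of_nonneg_left ?_ (Real.exp_nonneg _)
    simpa using hb' (x + y * I) (by simpa using hy)
  obtain ⟨δ, hδ1, hδ2⟩ := exists_between hωω'
  have hδ0 : 0 < δ := hω.trans_lt hδ1
  have hG : ∀ s : ℝ, ‖G s‖ ≤ Real.exp (-δ * |s|) * K := by
    intro s
    rcases le_total 0 s with hs | hs
    · have := hG1 δ (by rwa [abs_of_pos hδ0]) s
      rwa [abs_of_nonneg hs, show -δ * s = -(s * δ) by ring]
    · have := hG1 (-δ) (by rwa [abs_neg, abs_of_pos hδ0]) s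
      rwa [abs_of_nonpos hs, show -δ * -s = -(s * -δ) by ring]
  -- integrability with weight
  have hGint : Integrable (fun s : ℝ => Real.exp (ω * |s|) * ‖G s‖) := by
    have h1 := (integrable_exp_abs_aux (δ - ω) (by linarith)).mul_const K
    refine h1.mono' ?_ (Eventually.of_forall fun s => ?_)
    · exact ((by fun_prop : Measurable fun s : ℝ => Real.exp (ω * |s|)).mul
        hGmeas.norm).aestronglyMeasurable
    · rw [Real.norm_of_nonneg (by positivity)]
      calc _ ≤ Real.exp (ω * |s|) * (Real.exp (-δ * |s|) * K) := by gcongr; exact hG s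
        _ = _ := by rw [← mul_assoc, ← Real.exp_add]; ring_nf
  refine ⟨fun s => (1 / (2 * Real.pi) : ℝ) * G s, hGmeas.const_mul _, ?_, ?_⟩
  · refine (hGint.const_mul |1 / (2 * Real.pi)|).congr (Eventually.of_forall fun s => ?_)
    simp only [norm_mul, Complex.norm_real, Real.norm_eq_abs]
    ring
  intro z hz
  have hy : |z.im| ≤ ω := by
    rcases hz with h | h
    · exact h.le
    · simpa [h] using hω
  have hy' := hy.trans_lt hωω'
  have hInv : ∀ w : ℝ, 𝓕⁻ (fun x : ℝ => f (x + z.im * I)) w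
      = cexp (2 * Real.pi * w * z.im) * G (2 * Real.pi * w) := by
    intro w
    rw [Real.fourierInv_eq', ← hshift z.im hy' (2 * Real.pi * w), ← integral_const_mul]
    congr 1
    ext x
    rw [← mul_assoc, ← Complex.exp_add, smul_eq_mul]
    congr 2
    simp
    linear_combination (-2 * Real.pi * w * z.im : ℂ) * I_sq
  have hInt : Integrable (fun s : ℝ => cexp (s * z.im) * G s) := by
    refine hGint.mono' ?_ (Eventually.of_forall fun s => ?_)
    · exact ((by fun_prop : Measurable fun s : ℝ => cexp (s * z.im)).mul
        hGmeas).aestronglyMeasurable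
    · rw [norm_mul]
      gcongr
      rw [Complex.norm_exp]
      apply Real.exp_le_exp.2
      have e : ((s : ℂ) * z.im).re = s * z.im := by simp
      rw [e]
      calc (s * z.im) ≤ |s * z.im| := le_abs_self _
        _ = |z.im| * |s| := by rw [abs_mul, mul_comm]
        _ ≤ _ := by gcongr
  have hpi : (2 * Real.pi) ≠ 0 := by positivity
  have hInt1 : Integrable (𝓕⁻ (fun x : ℝ => f (x + z.im * I))) := by
    refine (hInt.comp_mul_left' hpi).congr (Eventually.of_forall fun w => ?_)
    simp only [hInv]
    push_cast
    rfl
  have hInt2 : Integrable (𝓕 (fun x : ℝ => f (x + z.im * I))) := by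
    refine hInt1.comp_neg.congr (Eventually.of_forall fun w => ?_)
    simp [Real.fourierInv_eq_fourier_neg]
  have main := congrFun
    ((hcont z.im hy').fourier_fourierInv_eq (hint z.im hy') hInt2) z.re
  simp only [Complex.re_add_im] at main
  rw [← main, Real.fourier_real_eq_integral_exp_smul]
  have cv := Measure.integral_comp_mul_left (fun s : ℝ => cexp (-I * s * z) * G s) (2 * Real.pi)
  have e1 : (fun s : ℝ => cexp (-I * s * z) * (((1 / (2 * Real.pi) : ℝ) : ℂ) * G s))
      = fun s : ℝ => ((1 / (2 * Real.pi) : ℝ) : ℂ) * (cexp (-I * s * z) * G s) := by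
    ext s; ring
  rw [e1, integral_const_mul]
  rw [abs_of_pos (by positivity), Complex.real_smul, ← one_div] at cv
  rw [← cv]
  congr 1
  ext w
  rw [hInv, smul_eq_mul, ← mul_assoc, ← Complex.exp_add]
  congr 2
  conv_rhs => rw [← Complex.re_add_im z]
  push_cast
  linear_combination (2 * Real.pi * w * z.im : ℂ) * I_sq


/-- Every function in the elementary class `E(St_{ω'})` (holomorphic on
the strip `St_{ω'}` with decay `|f(z)| ≤ C(1+|z|)^{-α}`, `α > 1`) is the Fourier
transform of an element of `M_ω(ℝ)` for `0 ≤ ω < ω'`: there is a measurable `g` with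
`∫ e^{ω|s|}|g(s)| ds < ∞` and `f(z) = ∫ e^{-isz} g(s) ds` on `St_ω` (with `St_0 = ℝ`). -/
theorem elementary_function_is_fourier_transform
    (ω ω' : ℝ) (hω : 0 ≤ ω) (hωω' : ω < ω') (f : ℂ → ℂ)
    (hf : DifferentiableOn ℂ f {z : ℂ | |z.im| < ω'})
    (C α : ℝ) (hC : 0 ≤ C) (hα : 1 < α)
    (hbound : ∀ z : ℂ, |z.im| < ω' → ‖f z‖ ≤ C * (1 + ‖z‖) ^ (-α)) :
    ∃ g : ℝ → ℂ, Measurable g ∧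
      Integrable (fun s : ℝ => Real.exp (ω * |s|) * ‖g s‖) ∧
      ∀ z : ℂ, (|z.im| < ω ∨ z.im = 0) →
        f z = ∫ s : ℝ, Complex.exp (-Complex.I * s * z) * g s := by
  exact elementary_aux ω ω' hω hωω' f hf C α hC hα hbound
end

section
/- Let X be a complex Banach space, (U(s))_{s∈ℝ} a C₀-group on X, N > 0, and let g : ℝ → ℂ be integrable with g(s) = 0 for |s| > N. Let φ, ψ : ℝ → ℂ be continuous with compact support such that (ψ∗φ)(s) = 1 for all s with |s| ≤ N, where (ψ∗φ)(s) = ∫_ℝ ψ(s−t)φ(t) dt. Then for every x ∈ X, ∫_ℝ φ(t)·U(t)( ∫_ℝ g(s)·ψ(s−t)·U(s−t)x ds ) dt = ∫_ℝ g(s)·U(s)x ds. (This is the factorization U_μ = P ∘ L_μ ∘ ι underlying the transference principle.) -/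
open MeasureTheory Filter Topology

/-- The factorization `U_μ = P ∘ L_μ ∘ ι` underlying the transference
principle: if `g` is integrable with support in `[-N,N]` and `φ, ψ` are continuous with
compact support satisfying `(ψ∗φ)(s) = 1` for `|s| ≤ N`, then for every `x`,
`∫ φ(t) U(t) ( ∫ g(s) ψ(s-t) U(s-t)x ds ) dt = ∫ g(s) U(s)x ds`. -/
theorem transference_factorization
    {X : Type*} [NormedAddCommGroup X] [NormedSpace ℂ X] [CompleteSpace X]
    (U : ℝ → X →L[ℂ] X)
    (hU0 : U 0 = ContinuousLinearMap.id ℂ X)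
    (hUadd : ∀ s t : ℝ, U (s + t) = (U s).comp (U t))
    (hUcont : ∀ x : X, Continuous fun s : ℝ => U s x)
    (N : ℝ) (hN : 0 < N)
    (g : ℝ → ℂ) (hgint : Integrable g) (hgsupp : ∀ s : ℝ, N < |s| → g s = 0)
    (φ ψ : ℝ → ℂ)
    (hφcont : Continuous φ) (hφsupp : HasCompactSupport φ)
    (hψcont : Continuous ψ) (hψsupp : HasCompactSupport ψ)
    (hconv : ∀ s : ℝ, |s| ≤ N → ∫ t : ℝ, ψ (s - t) * φ t = 1) :
    ∀ x : X,
      ∫ t : ℝ, φ t • U t (∫ s : ℝ, (g s * ψ (s - t)) • U (s - t) x)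
        = ∫ s : ℝ, g s • U s x := by
  intro x
  obtain ⟨Cψ, hCψ⟩ := hψsupp.exists_bound_of_continuous hψcont
  have hh : Integrable (fun s : ℝ => g s • U s x) := by
    obtain ⟨C, hC⟩ := (isCompact_Icc (a := -N) (b := N)).exists_bound_of_continuousOn
      (hUcont x).continuousOn
    refine Integrable.mono' (hgint.norm.mul_const C)
      (hgint.aestronglyMeasurable.smul (hUcont x).aestronglyMeasurable) ?_
    refine Eventually.of_forall fun s => ?_
    by_cases hs : N < |s|
    · simp [hgsupp s hs]
    · rw [norm_smul]
      exact mul_le_mul_of_nonneg_left (hC s (abs_le.mp (not_lt.mp hs))) (norm_nonneg _)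
  have hφint : Integrable φ := hφcont.integrable_of_hasCompactSupport hφsupp
  have hU : ∀ s t : ℝ, U t (U (s - t) x) = U s x := by
    intro s t
    have h := hUadd t (s - t)
    rw [add_sub_cancel] at h
    rw [h]; rfl
  have hinner : ∀ t : ℝ, Integrable (fun s : ℝ => (g s * ψ (s - t)) • U (s - t) x) := by
    intro t
    have hk : Continuous fun s : ℝ => ψ s • U s x := hψcont.smul (hUcont x)
    have hks : HasCompactSupport fun s : ℝ => ψ s • U s x := hψsupp.smul_right
    obtain ⟨C, hC⟩ := hks.exists_bound_of_continuous hk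
    have hk' : Continuous fun s : ℝ => ψ (s - t) • U (s - t) x :=
      hk.comp (continuous_id.sub continuous_const)
    simp_rw [mul_smul]
    refine Integrable.mono' (hgint.norm.mul_const C)
      (hgint.aestronglyMeasurable.smul hk'.aestronglyMeasurable) ?_
    refine Eventually.of_forall fun s => ?_
    rw [norm_smul]
    exact mul_le_mul_of_nonneg_left (hC (s - t)) (norm_nonneg _)
  have h1 : ∀ t : ℝ, φ t • U t (∫ s : ℝ, (g s * ψ (s - t)) • U (s - t) x)
      = ∫ s : ℝ, ψ (s - t) • (φ t • (g s • U s x)) := by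
    intro t
    rw [← ContinuousLinearMap.integral_comp_comm _ (hinner t), ← integral_smul]
    refine integral_congr_ae (Eventually.of_forall fun s => ?_)
    simp only [map_smul, hU, smul_smul]
    congr 1
    ring
  simp_rw [h1]
  have hprod : Integrable (Function.uncurry fun t s : ℝ => ψ (s - t) • (φ t • (g s • U s x)))
      (volume.prod volume) := by
    have h2 : Integrable (fun p : ℝ × ℝ => φ p.1 • (g p.2 • U p.2 x)) (volume.prod volume) :=
      hφint.smul_prod hh
    have hc : Continuous fun p : ℝ × ℝ => ψ (p.2 - p.1) :=
      hψcont.comp (continuous_snd.sub continuous_fst)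
    refine Integrable.mono' (h2.norm.const_mul Cψ)
      (hc.aestronglyMeasurable.smul h2.aestronglyMeasurable) ?_
    refine Eventually.of_forall fun p => ?_
    simp only [Function.uncurry]
    rw [norm_smul]
    exact mul_le_mul_of_nonneg_right (hCψ _) (norm_nonneg _)
  rw [integral_integral_swap hprod]
  refine integral_congr_ae (Eventually.of_forall fun s => ?_)
  simp only [smul_smul, ← mul_assoc]
  by_cases hs : N < |s|
  · simp [hgsupp s hs]
  · rw [integral_smul_const, integral_mul_const, hconv s (not_lt.mp hs), one_mul]
end

section
/- Let 0 < ω′ < ω and ψ ∈ (0, π/2), and set Σ_ψ := {z ∈ ℂ \ {0} : |arg z| < ψ or |arg(−z)| < ψ} and V_{ω,ψ} := St_ω ∪ Σ_ψ. Then there exists a constant C ≥ 0 such that for every function f that is holomorphic and bounded on the open set V_{ω,ψ}, one has, for all z ∈ St_{ω′}: |f(z)| + (1+|z|)·|f′(z)| ≤ C · sup_{w ∈ V_{ω,ψ}} |f(w)|. In other words, H^∞(V_{ω,ψ}) embeds continuously into the analytic Mikhlin algebra H^∞₁(St_{ω′}). -/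
open Filter Topology Real

lemma venturi_mem_aux (ω ψ : ℝ) (hψ0 : 0 < ψ) (hψ : ψ < π / 2) (w : ℂ)
    (h : |w.im| < ω ∨ |w.im| < Real.sin ψ * |w.re|) :
    w ∈ ({z : ℂ | |z.im| < ω} ∪
      {z : ℂ | z ≠ 0 ∧ (|Complex.arg z| < ψ ∨ |Complex.arg (-z)| < ψ)}) := by
  rcases h with h | h
  · exact Or.inl h
  · right
    have hw : w ≠ 0 := by
      rintro rfl
      simp at h
    have hs : 0 < Real.sin ψ := Real.sin_pos_of_pos_of_lt_pi hψ0 (by linarith)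
    have hn : 0 < ‖w‖ := norm_pos_iff.mpr hw
    have h2 : |w.im| < Real.sin ψ * ‖w‖ :=
      h.trans_le (mul_le_mul_of_nonneg_left (Complex.abs_re_le_norm w) hs.le)
    have key : ∀ t : ℝ, |t| < Real.sin ψ * ‖w‖ → |Real.arcsin (t / ‖w‖)| < ψ := by
      intro t ht
      rw [abs_lt] at ht ⊢
      constructor
      · rw [Real.lt_arcsin_iff_sin_lt' ⟨by linarith, by linarith⟩, Real.sin_neg, lt_div_iff₀ hn]
        linarith
      · rw [Real.arcsin_lt_iff_lt_sin' ⟨by linarith, by linarith⟩, div_lt_iff₀ hn]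
        linarith
    refine ⟨hw, ?_⟩
    rcases le_total 0 w.re with hr | hr
    · left
      rw [Complex.arg_of_re_nonneg hr]
      exact key _ h2
    · right
      rw [Complex.arg_of_re_nonneg (by simpa using hr), norm_neg, Complex.neg_im]
      exact key _ (by rwa [abs_neg])

lemma venturi_radius_aux (ω ω' s : ℝ) (hω' : 0 < ω') (hωω' : ω' < ω) (hs : 0 < s) :
    ∃ c : ℝ, 0 < c ∧ ∀ z w : ℂ, |z.im| < ω' → ‖w - z‖ ≤ c * (1 + ‖z‖) →
      |w.im| < ω ∨ |w.im| < s * |w.re| := by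
  have hδ : 0 < ω - ω' := by linarith
  set K : ℝ := s / (ω - ω') + (ω' / (ω - ω') + 1) * (1 + s) with hK
  have hKpos : 0 < K := by positivity
  refine ⟨s / (2 * K), by positivity, ?_⟩
  intro z w hz hw
  by_contra hcon
  push Not at hcon
  obtain ⟨h1, h2⟩ := hcon
  set d : ℝ := s / (2 * K) * (1 + ‖z‖) with hd
  have hdK : d * K = s * (1 + ‖z‖) / 2 := by
    rw [hd]; field_simp
  have him : |w.im| ≤ |z.im| + d := by
    have e1 := Complex.abs_im_le_norm (w - z)
    rw [Complex.sub_im] at e1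
    have := abs_sub_abs_le_abs_sub w.im z.im
    linarith
  have hre : |z.re| ≤ |w.re| + d := by
    have e1 := Complex.abs_re_le_norm (w - z)
    rw [Complex.sub_re, abs_sub_comm] at e1
    have := abs_sub_abs_le_abs_sub z.re w.re
    linarith
  have hzn := Complex.norm_le_abs_re_add_abs_im z
  have hdδ : ω - ω' ≤ d := by linarith
  have hq : 1 ≤ d / (ω - ω') := by rwa [le_div_iff₀ hδ, one_mul]
  have hdK2 : d * K = s * (d / (ω - ω')) + (ω' * (d / (ω - ω')) + d) * (1 + s) := by
    rw [hK]; ring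
  have a1 : s * ‖z‖ ≤ s * (|w.re| + d + ω') :=
    mul_le_mul_of_nonneg_left (by linarith) hs.le
  have a2 : s ≤ s * (d / (ω - ω')) := le_mul_of_one_le_right hs.le hq
  have a3 : ω' ≤ ω' * (d / (ω - ω')) := le_mul_of_one_le_right hω'.le hq
  have a4 : (ω' + d) * (1 + s) ≤ (ω' * (d / (ω - ω')) + d) * (1 + s) :=
    mul_le_mul_of_nonneg_right (by linarith) (by linarith)
  have a5 : 0 < s * (1 + ‖z‖) := by positivity
  nlinarith

/-- For `0 < ω' < ω` and `ψ ∈ (0, π/2)`, with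
`Σ_ψ = {z ≠ 0 : |arg z| < ψ or |arg(-z)| < ψ}` and `V_{ω,ψ} = St_ω ∪ Σ_ψ`, there is
`C ≥ 0` such that every bounded holomorphic `f` on `V_{ω,ψ}` satisfies
`|f(z)| + (1+|z|)|f'(z)| ≤ C · sup_{V_{ω,ψ}} |f|` on `St_{ω'}`; i.e. `H^∞(V_{ω,ψ})`
embeds continuously into the analytic Mikhlin algebra `H^∞₁(St_{ω'})`. -/
theorem Hinf_venturi_embeds_analytic_mikhlin
    (ω ω' ψ : ℝ) (hω' : 0 < ω') (hωω' : ω' < ω) (hψ0 : 0 < ψ) (hψ : ψ < π / 2) :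
    ∃ C : ℝ, 0 ≤ C ∧
      ∀ f : ℂ → ℂ,
        DifferentiableOn ℂ f
          ({z : ℂ | |z.im| < ω} ∪
            {z : ℂ | z ≠ 0 ∧ (|Complex.arg z| < ψ ∨ |Complex.arg (-z)| < ψ)}) →
        ∀ B : ℝ,
          (∀ w ∈ ({z : ℂ | |z.im| < ω} ∪
              {z : ℂ | z ≠ 0 ∧ (|Complex.arg z| < ψ ∨ |Complex.arg (-z)| < ψ)}),
            ‖f w‖ ≤ B) →
          ∀ z : ℂ, |z.im| < ω' →
            ‖f z‖ + (1 + ‖z‖) * ‖deriv f z‖ ≤ C * B := by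
  have hs : 0 < Real.sin ψ := Real.sin_pos_of_pos_of_lt_pi hψ0 (by linarith)
  obtain ⟨c, hc, hcV⟩ := venturi_radius_aux ω ω' (Real.sin ψ) hω' hωω' hs
  refine ⟨1 + 1 / c, by positivity, ?_⟩
  intro f hf B hB z hz
  have hmem := fun w hw => venturi_mem_aux ω ψ hψ0 hψ w (hcV z w hz hw)
  have hR : 0 < c * (1 + ‖z‖) := by positivity
  have hz0 : ‖f z‖ ≤ B := hB z (hmem z (by simpa using hR.le))
  have hd : ‖deriv f z‖ ≤ B / (c * (1 + ‖z‖)) := by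
    apply Complex.norm_deriv_le_of_forall_mem_sphere_norm_le hR
    · apply DifferentiableOn.diffContOnCl
      rw [closure_ball _ hR.ne']
      exact hf.mono fun w hw => hmem w (by rwa [mem_closedBall_iff_norm] at hw)
    · intro w hw
      exact hB w (hmem w (by rw [mem_sphere_iff_norm] at hw; exact hw.le))
  have h1 : (1 + ‖z‖) * ‖deriv f z‖ ≤ (1 + ‖z‖) * (B / (c * (1 + ‖z‖))) :=
    mul_le_mul_of_nonneg_left hd (by positivity)
  have h2 : (1 + ‖z‖) * (B / (c * (1 + ‖z‖))) = 1 / c * B := by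
    have : 1 + ‖z‖ ≠ 0 := by positivity
    field_simp
  linarith
end
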